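/- Let 1/3 < λ < 1, let a : [0,1] → ℝ be Lipschitz continuous, let g ∈ C^λ₀([0,1];ℝ), and let f : ℝ² → ℝ be such that f, ∂₁f, ∂₂f and ∂₂²f exist, are continuous and bounded on ℝ². Then there exists a constant C, depending only on f, λ, the λ-Hölder constant of g and the Lipschitz constant of a, such that for all 0 ≤ s < t ≤ 1: |∫_s^t f(a_u,g_u) d°g_u − ((f(a_s,g_s) + f(a_t,g_t))/2)·(g_t − g_s)| ≤ C·(t−s)^{min(1+λ, 3λ)}, where ∫_s^t f(a_u,g_u) d°g_u denotes the Russo–Vallois symmetric integral over [s,t] (which exists). -/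

import Mathlib

/-- The Russo–Vallois symmetric integral `∫ₛᵗ f dᵒg = I` over the interval `[s,t]`. -/
def HasSymmIntOn (f g : ℝ → ℝ) (s t : ℝ) (I : ℝ) : Prop :=
  Filter.Tendsto
    (fun ε : ℝ =>
      ∫ u in s..t, ((f (min (u + ε) t) + f u) / 2) * ((g (min (u + ε) t) - g u) / ε))
    (nhdsWithin 0 (Set.Ioi 0)) (nhds I)

/-!
Let `F(x, y) = ∫_c^y f(x, w) dw`. Then
`F(a_{u+ε}, g_{u+ε}) - F(a_u, g_u)
  = [F(a_{u+ε}, g_u) - F(a_u, g_u)] + ∫_{g_u}^{g_{u+ε}} f(a_{u+ε}, w) dw`,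
and the trapezoidal rule replaces the last integral by
`(f(a_{u+ε}, g_{u+ε}) + f(a_u, g_u)) / 2 * (g_{u+ε} - g_u)` up to `O(ε^{3λ} + ε^{1+λ})`, which is
`o(ε)` because `λ > 1/3`. Dividing by `ε`, integrating over `[s, t]` and letting `ε ↓ 0` gives the
Itô-type formula
`∫_s^t f(a_u, g_u) d°g_u = F(a_t, g_t) - F(a_s, g_s) - ∫_s^t ∂_v F(a_v, g_u)|_{v=u} du`.
For `c = g_s` the right-hand side is `∫_{g_s}^{g_t} f(a_t, w) dw + O((t - s)^{1+λ})`, and the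
trapezoidal rule on the single panel `[s, t]` gives the estimate.
-/

open Filter Topology MeasureTheory Set Function
open scoped NNReal Interval

section Holder

variable {X Y : Type*} [PseudoMetricSpace X] [PseudoMetricSpace Y]

theorem holderOnWith_of_dist_le {C r : ℝ≥0} {φ : X → Y} {A : Set X}
    (h : ∀ x ∈ A, ∀ y ∈ A, dist (φ x) (φ y) ≤ C * dist x y ^ (r : ℝ)) : HolderOnWith C r φ A := by
  intro x hx y hy
  rw [edist_nndist, edist_nndist, ← ENNReal.coe_rpow_of_nonneg _ r.coe_nonneg]
  exact_mod_cast h x hx y hy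

end Holder

theorem exists_lipschitzWith_of_abs_deriv_le {ι : Type*} {φ : ι → ℝ → ℝ}
    (hφ : ∀ i, Differentiable ℝ (φ i)) (hM : ∃ M : ℝ, ∀ i x, |deriv (φ i) x| ≤ M) :
    ∃ M : ℝ≥0, ∀ i, LipschitzWith M (φ i) := by
  obtain ⟨M, hM⟩ := hM
  exact ⟨M.toNNReal, fun i => lipschitzWith_of_nnnorm_deriv_le (hφ i) fun x =>
    NNReal.le_toNNReal_of_coe_le (hM i x)⟩

section Limits

variable {E : Type*} [NormedAddCommGroup E] [NormedSpace ℝ E] {s t : ℝ}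

theorem tendsto_intervalIntegral_of_norm_sub_le {ι : Type*} {l : Filter ι} {S D : ι → ℝ → E}
    {e : ι → ℝ} {I : E} (hS : ∀ i, IntervalIntegrable (S i) volume s t)
    (hD : ∀ i, IntervalIntegrable (D i) volume s t) (he : Tendsto e l (𝓝 0))
    (hSD : ∀ᶠ i in l, ∀ u ∈ Ι s t, ‖S i u - D i u‖ ≤ e i)
    (h : Tendsto (fun i => ∫ u in s..t, D i u) l (𝓝 I)) :
    Tendsto (fun i => ∫ u in s..t, S i u) l (𝓝 I) := by
  have hdiff : Tendsto (fun i => ∫ u in s..t, (S i u - D i u)) l (𝓝 0) := by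
    refine squeeze_zero_norm' (hSD.mono fun i hi =>
      intervalIntegral.norm_integral_le_of_norm_le_const hi) ?_
    simpa only [zero_mul] using he.mul_const |t - s|
  simpa only [intervalIntegral.integral_sub (hS _) (hD _), sub_add_cancel, zero_add]
    using hdiff.add h

theorem tendsto_integral_diffQuotient [CompleteSpace E] {H : ℝ → E} (hH : Continuous H) (s t : ℝ) :
    Tendsto (fun ε : ℝ => ∫ u in s..t, ε⁻¹ • (H (u + ε) - H u)) (𝓝[≠] 0) (𝓝 (H t - H s)) := by
  have hi : ∀ p q, IntervalIntegrable H volume p q := fun p q => hH.intervalIntegrable p q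
  have hslope : ∀ x, Tendsto (fun ε : ℝ => ε⁻¹ • ((∫ u in s..x + ε, H u) - ∫ u in s..x, H u))
      (𝓝[≠] 0) (𝓝 (H x)) := fun x =>
    (hH.integral_hasStrictDerivAt s x).hasDerivAt.tendsto_slope_zero
  refine ((hslope t).sub (hslope s)).congr fun ε => ?_
  have hshift : IntervalIntegrable (fun u => H (u + ε)) volume s t :=
    (hH.comp (continuous_add_const ε)).intervalIntegrable _ _
  rw [intervalIntegral.integral_smul, intervalIntegral.integral_sub hshift (hi s t),
    intervalIntegral.integral_comp_add_right,
    ← intervalIntegral.integral_interval_sub_left (hi s (t + ε)) (hi s (s + ε)),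
    intervalIntegral.integral_same, ← smul_sub]
  congr 1
  abel

theorem tendsto_integral_diag_diffQuotient {G : ℝ → ℝ → E} {L : ℝ≥0}
    (hG : Continuous (uncurry G)) (hL : ∀ u ∈ Ι s t, LipschitzWith L (G u))
    (hd : ∀ᵐ u, u ∈ Ι s t → DifferentiableAt ℝ (G u) u) :
    Tendsto (fun ε : ℝ => ∫ u in s..t, ε⁻¹ • (G u (u + ε) - G u u)) (𝓝[≠] 0)
      (𝓝 (∫ u in s..t, deriv (G u) u)) := by
  refine intervalIntegral.tendsto_integral_filter_of_dominated_convergence (fun _ => (L : ℝ))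
    (Eventually.of_forall fun ε => ?_) ?_ intervalIntegrable_const ?_
  · have hcont : Continuous fun u => ε⁻¹ • (G u (u + ε) - G u u) :=
      ((hG.comp₂ continuous_id (continuous_add_const ε)).sub
        (hG.comp₂ continuous_id continuous_id)).const_smul ε⁻¹
    exact hcont.aestronglyMeasurable
  · filter_upwards [self_mem_nhdsWithin] with ε hε
    refine Eventually.of_forall fun u hu => ?_
    have hlip : ‖G u (u + ε) - G u u‖ ≤ L * |ε| := by
      simpa [← dist_eq_norm] using (hL u hu).dist_le_mul (u + ε) u
    rwa [norm_smul, norm_inv, Real.norm_eq_abs, inv_mul_le_iff₀ (abs_pos.2 hε), mul_comm]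
  · filter_upwards [hd] with u hu hus
    exact (hu hus).hasDerivAt.tendsto_slope_zero

theorem tendsto_rpow_div_self_nhdsGT_zero {p : ℝ} (hp : 1 < p) :
    Tendsto (fun ε : ℝ => ε ^ p / ε) (𝓝[>] 0) (𝓝 0) := by
  have hq : 0 < p - 1 := sub_pos.2 hp
  have hlim : Tendsto (fun ε : ℝ => ε ^ (p - 1)) (𝓝[>] 0) (𝓝 0) := by
    simpa only [Real.zero_rpow hq.ne'] using
      ((Real.continuous_rpow_const hq.le).tendsto 0).mono_left nhdsWithin_le_nhds
  refine hlim.congr' ?_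
  filter_upwards [self_mem_nhdsWithin] with ε hε
  exact Real.rpow_sub_one (ne_of_gt hε) p

end Limits

section Trapezoid

theorem integral_sub_midpoint_mul_deriv {φ : ℝ → ℝ} (hφ : Differentiable ℝ φ) {p q : ℝ}
    (hφ' : IntervalIntegrable (deriv φ) volume p q) :
    ∫ w in p..q, (w - (p + q) / 2) * deriv φ w
      = (φ q + φ p) / 2 * (q - p) - ∫ w in p..q, φ w := by
  rw [intervalIntegral.integral_mul_deriv_eq_deriv_mul (u' := fun _ => 1)
    (fun w _ => (hasDerivAt_id' w).sub_const _) (fun w _ => (hφ w).hasDerivAt)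
    intervalIntegrable_const hφ']
  simp only [one_mul]
  ring

theorem integral_sub_midpoint (p q : ℝ) : ∫ w in p..q, (w - (p + q) / 2) = 0 := by
  rw [intervalIntegral.integral_sub intervalIntegral.intervalIntegrable_id
    intervalIntegrable_const, integral_id, intervalIntegral.integral_const, smul_eq_mul]
  ring

theorem abs_sub_midpoint_le {p q w : ℝ} (hw : w ∈ [[p, q]]) :
    |w - (p + q) / 2| ≤ |q - p| / 2 := by
  rw [abs_le]
  rcases le_total p q with h | h
  · rw [uIcc_of_le h] at hw
    rw [abs_of_nonneg (sub_nonneg.2 h)]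
    constructor <;> linarith [hw.1, hw.2]
  · rw [uIcc_of_ge h] at hw
    rw [abs_of_nonpos (sub_nonpos.2 h)]
    constructor <;> linarith [hw.1, hw.2]

theorem abs_trapezoid_sub_integral_le {φ : ℝ → ℝ} {M : ℝ≥0} (hφ : Differentiable ℝ φ)
    (hφ' : LipschitzWith M (deriv φ)) (p q : ℝ) :
    |(φ q + φ p) / 2 * (q - p) - ∫ w in p..q, φ w| ≤ M / 2 * |q - p| ^ 3 := by
  have hcont : Continuous (deriv φ) := hφ'.continuous
  have herror : ∫ w in p..q, (w - (p + q) / 2) * (deriv φ w - deriv φ p)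
      = (φ q + φ p) / 2 * (q - p) - ∫ w in p..q, φ w := by
    simp only [mul_sub (_ - _)]
    rw [intervalIntegral.integral_sub (Continuous.intervalIntegrable (by fun_prop) _ _)
      (Continuous.intervalIntegrable (by fun_prop) _ _),
      integral_sub_midpoint_mul_deriv hφ (hcont.intervalIntegrable _ _),
      intervalIntegral.integral_mul_const, integral_sub_midpoint, zero_mul, sub_zero]
  rw [← herror]
  have hbound : ∀ w ∈ Ι p q,
      ‖(w - (p + q) / 2) * (deriv φ w - deriv φ p)‖ ≤ |q - p| / 2 * (M * |q - p|) := by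
    intro w hw
    have hmid : |w - (p + q) / 2| ≤ |q - p| / 2 := abs_sub_midpoint_le (uIoc_subset_uIcc hw)
    have hderiv : |deriv φ w - deriv φ p| ≤ M * |w - p| := hφ'.dist_le_mul w p
    have hwp : |w - p| ≤ |q - p| := abs_sub_left_of_mem_uIcc (uIoc_subset_uIcc hw)
    rw [norm_mul, Real.norm_eq_abs, Real.norm_eq_abs]
    gcongr
    exact hderiv.trans (by gcongr)
  calc _ ≤ |q - p| / 2 * (M * |q - p|) * |q - p| :=
        intervalIntegral.norm_integral_le_of_norm_le_const hbound
    _ = M / 2 * |q - p| ^ 3 := by ring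

variable {f : ℝ → ℝ → ℝ} {M₁ M₂ : ℝ≥0}

theorem abs_trapezoid_sub_integral_snd_le (hL₁ : ∀ y, LipschitzWith M₁ (f · y))
    (hd₂ : ∀ x, Differentiable ℝ (f x)) (hL₂ : ∀ x, LipschitzWith M₂ (deriv (f x)))
    (x x' y y' : ℝ) :
    |(f x' y' + f x y) / 2 * (y' - y) - ∫ w in y..y', f x' w|
      ≤ M₂ / 2 * |y' - y| ^ 3 + M₁ / 2 * |x' - x| * |y' - y| := by
  have hshift : |(f x' y - f x y) / 2 * (y' - y)| ≤ M₁ / 2 * |x' - x| * |y' - y| := by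
    have hfst : |f x' y - f x y| ≤ M₁ * |x' - x| := (hL₁ y).dist_le_mul x' x
    rw [abs_mul, abs_div, abs_two, div_mul_eq_mul_div (M₁ : ℝ)]
    gcongr
  calc _ = |((f x' y' + f x' y) / 2 * (y' - y) - ∫ w in y..y', f x' w)
        - (f x' y - f x y) / 2 * (y' - y)| := by ring_nf
    _ ≤ _ := abs_sub _ _
    _ ≤ _ := add_le_add (abs_trapezoid_sub_integral_le (hd₂ x') (hL₂ x') y y') hshift

theorem abs_trapezoid_path_sub_integral_snd_le (hL₁ : ∀ y, LipschitzWith M₁ (f · y))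
    (hd₂ : ∀ x, Differentiable ℝ (f x)) (hL₂ : ∀ x, LipschitzWith M₂ (deriv (f x)))
    {g a : ℝ → ℝ} {C r K : ℝ≥0} {A : Set ℝ} (hg : HolderOnWith C r g A)
    (ha : LipschitzOnWith K a A) {u v : ℝ} (hu : u ∈ A) (hv : v ∈ A) :
    |(f (a v) (g v) + f (a u) (g u)) / 2 * (g v - g u) - ∫ w in g u..g v, f (a v) w|
      ≤ M₂ * C ^ 3 / 2 * |v - u| ^ (3 * r : ℝ) + M₁ * K * C / 2 * |v - u| ^ (1 + r : ℝ) := by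
  have hgv : |g v - g u| ≤ C * |v - u| ^ (r : ℝ) := hg.dist_le hv hu
  have hav : |a v - a u| ≤ K * |v - u| := ha.dist_le_mul v hv u hu
  have hcube : |v - u| ^ (3 * r : ℝ) = (|v - u| ^ (r : ℝ)) ^ 3 := by
    rw [mul_comm, Real.rpow_mul (abs_nonneg _)]
    exact Real.rpow_natCast _ 3
  have hprod : |v - u| ^ (1 + r : ℝ) = |v - u| * |v - u| ^ (r : ℝ) := by
    rw [Real.rpow_add' (abs_nonneg _) (by positivity), Real.rpow_one]
  calc _ ≤ M₂ / 2 * |g v - g u| ^ 3 + M₁ / 2 * |a v - a u| * |g v - g u| :=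
        abs_trapezoid_sub_integral_snd_le hL₁ hd₂ hL₂ _ _ _ _
    _ ≤ M₂ / 2 * (C * |v - u| ^ (r : ℝ)) ^ 3
        + M₁ / 2 * (K * |v - u|) * (C * |v - u| ^ (r : ℝ)) := by gcongr
    _ = _ := by rw [hcube, hprod]; ring

end Trapezoid

section SndPrimitive

/-- The primitive `F(x, y) = ∫_c^y f(x, w) dw` of `f` in its second variable. -/
noncomputable def sndPrimitive (f : ℝ → ℝ → ℝ) (c x y : ℝ) : ℝ :=
  ∫ w in c..y, f x w

variable {f : ℝ → ℝ → ℝ} {M₁ : ℝ≥0}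

theorem continuous_uncurry_of_lipschitzWith_fst (hL₁ : ∀ y, LipschitzWith M₁ (f · y))
    (hc₂ : ∀ x, Continuous (f x)) : Continuous (uncurry f) :=
  continuous_prod_of_continuous_lipschitzWith _ M₁ hc₂ hL₁

theorem sndPrimitive_sub_sndPrimitive (hc₂ : ∀ x, Continuous (f x)) (c x y y' : ℝ) :
    sndPrimitive f c x y' - sndPrimitive f c x y = ∫ w in y..y', f x w :=
  intervalIntegral.integral_interval_sub_left ((hc₂ x).intervalIntegrable _ _)
    ((hc₂ x).intervalIntegrable _ _)

theorem continuous_uncurry_sndPrimitive (hf : Continuous (uncurry f)) (c : ℝ) :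
    Continuous (uncurry (sndPrimitive f c)) :=
  intervalIntegral.continuous_parametric_primitive_of_continuous hf

theorem lipschitzWith_sndPrimitive (hL₁ : ∀ y, LipschitzWith M₁ (f · y))
    (hc₂ : ∀ x, Continuous (f x)) (c y : ℝ) :
    LipschitzWith (M₁ * nndist y c) (sndPrimitive f c · y) := by
  refine LipschitzWith.of_dist_le_mul fun x x' => ?_
  have hbound : ∀ w ∈ Ι c y, ‖f x w - f x' w‖ ≤ M₁ * dist x x' := fun w _ =>
    (hL₁ w).dist_le_mul x x'
  rw [Real.dist_eq, sndPrimitive, sndPrimitive, ← intervalIntegral.integral_sub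
    ((hc₂ x).intervalIntegrable _ _) ((hc₂ x').intervalIntegrable _ _)]
  calc _ ≤ M₁ * dist x x' * |y - c| := intervalIntegral.norm_integral_le_of_norm_le_const hbound
    _ = (M₁ * nndist y c : ℝ≥0) * dist x x' := by
        rw [NNReal.coe_mul, coe_nndist, Real.dist_eq y c]; ring

theorem differentiable_sndPrimitive (hd₁ : ∀ y, Differentiable ℝ (f · y))
    (hL₁ : ∀ y, LipschitzWith M₁ (f · y)) (hc₂ : ∀ x, Continuous (f x)) (c y : ℝ) :
    Differentiable ℝ (sndPrimitive f c · y) := by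
  intro x
  have hmeas : Measurable fun w => deriv (f · w) x :=
    (measurable_deriv_with_param (f := fun w z => f z w)
      ((continuous_uncurry_of_lipschitzWith_fst hL₁ hc₂).comp continuous_swap)).comp
      (measurable_id.prodMk measurable_const)
  exact (intervalIntegral.hasDerivAt_integral_of_dominated_loc_of_deriv_le
    (F := f) (F' := fun z w => deriv (f · w) z) (bound := fun _ => M₁) univ_mem
    (Eventually.of_forall fun z => (hc₂ z).aestronglyMeasurable)
    ((hc₂ x).intervalIntegrable _ _)
    hmeas.aestronglyMeasurable
    (Eventually.of_forall fun w _ z _ => norm_deriv_le_of_lipschitz (hL₁ w))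
    intervalIntegrable_const
    (Eventually.of_forall fun w _ z _ => (hd₁ w z).hasDerivAt)).2.differentiableAt

end SndPrimitive

section SymmetricIntegral

/-- The right-hand side `F(a_t, g_t) - F(a_s, g_s) - ∫_s^t ∂_v F(a_v, g_u)|_{v=u} du` of the
Itô-type formula for `∫_s^t f(a_u, g_u) d°g_u`, where `F` is the primitive of `f` in its second
variable based at `c`. -/
noncomputable def itoValue (f : ℝ → ℝ → ℝ) (g a : ℝ → ℝ) (c s t : ℝ) : ℝ :=
  sndPrimitive f c (a t) (g t) - sndPrimitive f c (a s) (g s)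
    - ∫ u in s..t, deriv (fun v => sndPrimitive f c (a v) (g u)) u

variable {f : ℝ → ℝ → ℝ} {g a : ℝ → ℝ} {M₁ M₂ C r K R : ℝ≥0} {c s t : ℝ}

theorem lipschitzWith_sndPrimitive_comp (hL₁ : ∀ y, LipschitzWith M₁ (f · y))
    (hc₂ : ∀ x, Continuous (f x)) (ha : LipschitzWith K a) {y : ℝ} (hy : nndist y c ≤ R) :
    LipschitzWith (M₁ * R * K) fun v => sndPrimitive f c (a v) y :=
  ((lipschitzWith_sndPrimitive hL₁ hc₂ c y).weaken (by gcongr)).comp ha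

theorem abs_integral_deriv_sndPrimitive_comp_le (hL₁ : ∀ y, LipschitzWith M₁ (f · y))
    (hc₂ : ∀ x, Continuous (f x)) (ha : LipschitzWith K a)
    (hR : ∀ u ∈ Ι s t, nndist (g u) c ≤ R) :
    |∫ u in s..t, deriv (fun v => sndPrimitive f c (a v) (g u)) u| ≤ M₁ * R * K * |t - s| :=
  intervalIntegral.norm_integral_le_of_norm_le_const fun u hu =>
    norm_deriv_le_of_lipschitz (lipschitzWith_sndPrimitive_comp hL₁ hc₂ ha (hR u hu))

theorem tendsto_integral_integral_snd_div (hd₁ : ∀ y, Differentiable ℝ (f · y))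
    (hL₁ : ∀ y, LipschitzWith M₁ (f · y)) (hc₂ : ∀ x, Continuous (f x)) (hg : Continuous g)
    (ha : LipschitzWith K a) (c s t : ℝ) :
    Tendsto (fun ε : ℝ => ∫ u in s..t, (∫ w in g u..g (u + ε), f (a (u + ε)) w) / ε) (𝓝[≠] 0)
      (𝓝 (itoValue f g a c s t)) := by
  have hf : Continuous (uncurry f) := continuous_uncurry_of_lipschitzWith_fst hL₁ hc₂
  set G : ℝ → ℝ → ℝ := fun u v => sndPrimitive f c (a v) (g u) with hG_def
  have hG : Continuous (uncurry G) := (continuous_uncurry_sndPrimitive hf c).comp₂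
    (ha.continuous.comp continuous_snd) (hg.comp continuous_fst)
  have hdiag : Continuous fun u => G u u := hG.comp₂ continuous_id continuous_id
  have hG_diff : ∀ᵐ u, u ∈ Ι s t → DifferentiableAt ℝ (G u) u := by
    filter_upwards [ha.ae_differentiableAt_real] with u hu _
    exact (differentiable_sndPrimitive hd₁ hL₁ hc₂ c (g u) (a u)).comp u hu
  obtain ⟨R, hR⟩ : ∃ R : ℝ≥0, ∀ u ∈ uIcc s t, nndist (g u) c ≤ R := by
    obtain ⟨R, hR⟩ := isCompact_uIcc.exists_bound_of_continuousOn (s := uIcc s t)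
      (hg.sub continuous_const : Continuous fun u => g u - c).continuousOn
    exact ⟨R.toNNReal, fun u hu => NNReal.le_toNNReal_of_coe_le (hR u hu)⟩
  have hG_lip : ∀ u ∈ Ι s t, LipschitzWith (M₁ * R * K) (G u) := fun u hu =>
    lipschitzWith_sndPrimitive_comp hL₁ hc₂ ha (hR u (uIoc_subset_uIcc hu))
  refine ((tendsto_integral_diffQuotient hdiag s t).sub
    (tendsto_integral_diag_diffQuotient hG hG_lip hG_diff)).congr fun ε => ?_
  have hshift : Continuous fun u : ℝ => u + ε := continuous_add_const ε
  have htotal : Continuous fun u => ε⁻¹ • (G (u + ε) (u + ε) - G u u) :=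
    ((hdiag.comp hshift).sub hdiag).const_smul ε⁻¹
  have hpartial : Continuous fun u => ε⁻¹ • (G u (u + ε) - G u u) :=
    ((hG.comp₂ continuous_id hshift).sub hdiag).const_smul ε⁻¹
  rw [← intervalIntegral.integral_sub (htotal.intervalIntegrable s t)
    (hpartial.intervalIntegrable s t)]
  refine intervalIntegral.integral_congr fun u _ => ?_
  simp only [hG_def, smul_eq_mul, ← sndPrimitive_sub_sndPrimitive hc₂ c]
  ring

theorem tendsto_integral_trapezoid_div (hd₁ : ∀ y, Differentiable ℝ (f · y))
    (hL₁ : ∀ y, LipschitzWith M₁ (f · y)) (hd₂ : ∀ x, Differentiable ℝ (f x))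
    (hL₂ : ∀ x, LipschitzWith M₂ (deriv (f x))) (hr : (1 / 3 : ℝ) < r) (hg : HolderWith C r g)
    (ha : LipschitzWith K a) (c s t : ℝ) :
    Tendsto (fun ε : ℝ => ∫ u in s..t,
        (f (a (u + ε)) (g (u + ε)) + f (a u) (g u)) / 2 * ((g (u + ε) - g u) / ε)) (𝓝[>] 0)
      (𝓝 (itoValue f g a c s t)) := by
  have hr₀ : (0 : ℝ) < r := by linarith
  have hc₂ : ∀ x, Continuous (f x) := fun x => (hd₂ x).continuous
  have hf : Continuous (uncurry f) := continuous_uncurry_of_lipschitzWith_fst hL₁ hc₂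
  have hgc : Continuous g := hg.continuous (by exact_mod_cast hr₀)
  have hac : Continuous a := ha.continuous
  have hrate : Tendsto (fun ε : ℝ => M₂ * C ^ 3 / 2 * (ε ^ (3 * r : ℝ) / ε)
      + M₁ * K * C / 2 * (ε ^ (1 + r : ℝ) / ε)) (𝓝[>] 0) (𝓝 0) := by
    simpa using ((tendsto_rpow_div_self_nhdsGT_zero (by linarith)).const_mul _).add
      ((tendsto_rpow_div_self_nhdsGT_zero (by linarith)).const_mul _)
  refine tendsto_intervalIntegral_of_norm_sub_le (fun ε => ?_) (fun ε => ?_) hrate ?_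
    ((tendsto_integral_integral_snd_div hd₁ hL₁ hc₂ hgc ha c s t).mono_left (nhdsGT_le_nhdsNE 0))
  · exact Continuous.intervalIntegrable (by fun_prop) s t
  · have hF := continuous_uncurry_sndPrimitive hf c
    have ha_shift : Continuous fun u => a (u + ε) := by fun_prop
    have hg_shift : Continuous fun u => g (u + ε) := by fun_prop
    simp only [← sndPrimitive_sub_sndPrimitive hc₂ c]
    have hinc := (hF.comp₂ ha_shift hg_shift).sub (hF.comp₂ ha_shift hgc)
    exact (hinc.div_const ε).intervalIntegrable s t
  · filter_upwards [self_mem_nhdsWithin] with ε (hε : 0 < ε) u _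
    have hpanel := abs_trapezoid_path_sub_integral_snd_le hL₁ hd₂ hL₂ (hg.holderOnWith univ)
      (ha.lipschitzOnWith (s := univ)) (mem_univ u) (mem_univ (u + ε))
    rw [add_sub_cancel_left, abs_of_pos hε] at hpanel
    rw [← mul_div_assoc, ← sub_div, norm_div, Real.norm_eq_abs, Real.norm_eq_abs, abs_of_pos hε,
      ← mul_div_assoc, ← mul_div_assoc, ← add_div]
    gcongr

theorem abs_itoValue_sub_trapezoid_le (hL₁ : ∀ y, LipschitzWith M₁ (f · y))
    (hd₂ : ∀ x, Differentiable ℝ (f x)) (hL₂ : ∀ x, LipschitzWith M₂ (deriv (f x)))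
    (hg : HolderWith C r g) (ha : LipschitzWith K a) (s t : ℝ) :
    |itoValue f g a (g s) s t - (f (a s) (g s) + f (a t) (g t)) / 2 * (g t - g s)|
      ≤ M₂ * C ^ 3 / 2 * |t - s| ^ (3 * r : ℝ)
        + 3 * (M₁ * K * C) / 2 * |t - s| ^ (1 + r : ℝ) := by
  have hR : ∀ u ∈ Ι s t, nndist (g u) (g s) ≤ C * nndist t s ^ (r : ℝ) := fun u hu =>
    hg.nndist_le_of_le (abs_sub_left_of_mem_uIcc (uIoc_subset_uIcc hu))
  have hcorrection : |∫ u in s..t, deriv (fun v => sndPrimitive f (g s) (a v) (g u)) u|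
      ≤ M₁ * K * C * |t - s| ^ (1 + r : ℝ) := by
    refine (abs_integral_deriv_sndPrimitive_comp_le hL₁ (fun x => (hd₂ x).continuous) ha hR).trans
      (le_of_eq ?_)
    rw [Real.rpow_add' (abs_nonneg _) (by positivity), Real.rpow_one, NNReal.coe_mul,
      NNReal.coe_rpow, coe_nndist, Real.dist_eq]
    ring
  have hpanel := abs_trapezoid_path_sub_integral_snd_le hL₁ hd₂ hL₂ (hg.holderOnWith univ)
    (ha.lipschitzOnWith (s := univ)) (mem_univ s) (mem_univ t)
  have hbase : sndPrimitive f (g s) (a s) (g s) = 0 := intervalIntegral.integral_same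
  rw [itoValue, hbase, sub_zero, sndPrimitive, add_comm (f (a s) (g s))]
  set T := (f (a t) (g t) + f (a s) (g s)) / 2 * (g t - g s)
  set J := ∫ u in s..t, deriv (fun v => sndPrimitive f (g s) (a v) (g u)) u
  calc |(∫ w in g s..g t, f (a t) w) - J - T|
      = |(T - ∫ w in g s..g t, f (a t) w) + J| := by rw [← abs_neg]; ring_nf
    _ ≤ _ := abs_add_le _ _
    _ ≤ _ := add_le_add hpanel hcorrection
    _ = _ := by ring

theorem hasSymmIntOn_of_tendsto_projIcc {φ : ℝ → ℝ} {I : ℝ} (hst : s ≤ t)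
    (h : Tendsto (fun ε : ℝ => ∫ u in s..t,
      (φ (projIcc s t hst (u + ε)) + φ (projIcc s t hst u)) / 2
        * ((g (projIcc s t hst (u + ε)) - g (projIcc s t hst u)) / ε)) (𝓝[>] 0) (𝓝 I)) :
    HasSymmIntOn φ g s t I := by
  refine h.congr' ?_
  filter_upwards [self_mem_nhdsWithin] with ε (hε : 0 < ε)
  refine intervalIntegral.integral_congr fun u hu => ?_
  rw [uIcc_of_le hst] at hu
  have hproj : (projIcc s t hst u : ℝ) = u := by rw [projIcc_of_mem hst hu]
  have hproj_shift : (projIcc s t hst (u + ε) : ℝ) = min (u + ε) t := by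
    rw [coe_projIcc, min_comm, max_eq_right (le_min (by linarith [hu.1]) hst)]
  simp only [hproj, hproj_shift]

theorem exists_hasSymmIntOn_abs_sub_trapezoid_le (hd₁ : ∀ y, Differentiable ℝ (f · y))
    (hL₁ : ∀ y, LipschitzWith M₁ (f · y)) (hd₂ : ∀ x, Differentiable ℝ (f x))
    (hL₂ : ∀ x, LipschitzWith M₂ (deriv (f x))) (hr : (1 / 3 : ℝ) < r) (hst : s ≤ t)
    (hg : HolderOnWith C r g (Icc s t)) (ha : LipschitzOnWith K a (Icc s t)) :
    ∃ I : ℝ, HasSymmIntOn (fun u => f (a u) (g u)) g s t I ∧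
      |I - (f (a s) (g s) + f (a t) (g t)) / 2 * (g t - g s)|
        ≤ M₂ * C ^ 3 / 2 * (t - s) ^ (3 * r : ℝ)
          + 3 * (M₁ * K * C) / 2 * (t - s) ^ (1 + r : ℝ) := by
  have hmem : ∀ u, (projIcc s t hst u : ℝ) ∈ Icc s t := fun u => (projIcc s t hst u).2
  have hproj : LipschitzWith 1 fun u => (projIcc s t hst u : ℝ) := LipschitzWith.projIcc hst
  have hg_ext : HolderWith C r fun u => g (projIcc s t hst u) := by
    simpa [comp_def] using hg.comp_holderWith hproj.holderWith hmem
  have ha_ext : LipschitzWith K fun u => a (projIcc s t hst u) := by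
    simpa [comp_def] using ha.comp hproj.lipschitzOnWith (mapsTo_univ_iff.2 hmem)
  refine ⟨_, hasSymmIntOn_of_tendsto_projIcc hst
    (tendsto_integral_trapezoid_div hd₁ hL₁ hd₂ hL₂ hr hg_ext ha_ext
      (g (projIcc s t hst s)) s t), ?_⟩
  simpa only [projIcc_left, projIcc_right, abs_of_nonneg (sub_nonneg.2 hst)]
    using abs_itoValue_sub_trapezoid_le hL₁ hd₂ hL₂ hg_ext ha_ext s t

end SymmetricIntegral

theorem stmt3_general {lam : ℝ} (hlam : 1 / 3 < lam) (Cg : ℝ) (K : ℝ≥0) {f : ℝ → ℝ → ℝ}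
    (hd₁ : ∀ y, Differentiable ℝ (f · y)) (hL₁ : ∃ M : ℝ≥0, ∀ y, LipschitzWith M (f · y))
    (hd₂ : ∀ x, Differentiable ℝ (f x)) (hL₂ : ∃ M : ℝ≥0, ∀ x, LipschitzWith M (deriv (f x))) :
    ∃ C : ℝ, ∀ g a : ℝ → ℝ,
      (∀ s ∈ Icc (0 : ℝ) 1, ∀ t ∈ Icc (0 : ℝ) 1, |g t - g s| ≤ Cg * |t - s| ^ lam) →
      LipschitzOnWith K a (Icc 0 1) →
      ∀ s t : ℝ, 0 ≤ s → s < t → t ≤ 1 →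
        ∃ I : ℝ, HasSymmIntOn (fun u => f (a u) (g u)) g s t I ∧
          |I - (f (a s) (g s) + f (a t) (g t)) / 2 * (g t - g s)|
            ≤ C * (t - s) ^ min (1 + lam) (3 * lam) := by
  obtain ⟨M₁, hL₁⟩ := hL₁
  obtain ⟨M₂, hL₂⟩ := hL₂
  refine ⟨M₂ * Cg ^ 3 / 2 + 3 * (M₁ * K * Cg) / 2, fun g a hg ha s t hs hst ht => ?_⟩
  have hCg : 0 ≤ Cg := by
    simpa using (abs_nonneg _).trans (hg 0 (by simp) 1 (by simp))
  lift Cg to ℝ≥0 using hCg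
  lift lam to ℝ≥0 using (by linarith)
  have hsub : Icc s t ⊆ Icc 0 1 := Icc_subset_Icc hs ht
  have hg_holder : HolderOnWith Cg lam g (Icc 0 1) :=
    holderOnWith_of_dist_le fun x hx y hy => hg y hy x hx
  obtain ⟨I, hI, hI_le⟩ := exists_hasSymmIntOn_abs_sub_trapezoid_le hd₁ hL₁ hd₂ hL₂ hlam hst.le
    (hg_holder.mono hsub) (ha.mono hsub)
  have hexp : ∀ p, min (1 + lam : ℝ) (3 * lam) ≤ p →
      (t - s) ^ p ≤ (t - s) ^ min (1 + lam : ℝ) (3 * lam) := fun p =>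
    Real.rpow_le_rpow_of_exponent_ge (sub_pos.2 hst) (by linarith)
  refine ⟨I, hI, hI_le.trans ?_⟩
  rw [add_mul]
  gcongr M₂ * Cg ^ 3 / 2 * ?_ + 3 * (M₁ * K * Cg) / 2 * ?_
  · exact hexp _ (min_le_right _ _)
  · exact hexp _ (min_le_left _ _)

theorem stmt3
    (lam : ℝ) (hlam1 : 1/3 < lam) (hlam2 : lam < 1)
    (Cg : ℝ) (K : NNReal)
    (f : ℝ → ℝ → ℝ)
    (hfd1 : ∀ y : ℝ, Differentiable ℝ (fun x => f x y))
    (hfd2 : ∀ x : ℝ, Differentiable ℝ (f x))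
    (hfd22 : ∀ x : ℝ, Differentiable ℝ (deriv (f x)))
    (hfc : Continuous fun p : ℝ × ℝ => f p.1 p.2)
    (hfc1 : Continuous fun p : ℝ × ℝ => deriv (fun x => f x p.2) p.1)
    (hfc2 : Continuous fun p : ℝ × ℝ => deriv (f p.1) p.2)
    (hfc22 : Continuous fun p : ℝ × ℝ => deriv (deriv (f p.1)) p.2)
    (hbd : ∃ M : ℝ, ∀ x y : ℝ, |f x y| ≤ M)
    (hbd1 : ∃ M : ℝ, ∀ x y : ℝ, |deriv (fun x' => f x' y) x| ≤ M)
    (hbd2 : ∃ M : ℝ, ∀ x y : ℝ, |deriv (f x) y| ≤ M)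
    (hbd22 : ∃ M : ℝ, ∀ x y : ℝ, |deriv (deriv (f x)) y| ≤ M) :
    ∃ C : ℝ, ∀ g a : ℝ → ℝ,
      (∀ s ∈ Set.Icc (0:ℝ) 1, ∀ t ∈ Set.Icc (0:ℝ) 1, |g t - g s| ≤ Cg * |t - s| ^ lam) →
      g 0 = 0 →
      LipschitzOnWith K a (Set.Icc 0 1) →
      ∀ s t : ℝ, 0 ≤ s → s < t → t ≤ 1 →
        ∃ I : ℝ, HasSymmIntOn (fun u => f (a u) (g u)) g s t I ∧
          |I - ((f (a s) (g s) + f (a t) (g t)) / 2) * (g t - g s)|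
            ≤ C * (t - s) ^ min (1 + lam) (3 * lam) := by
  exact (stmt3_general hlam1 Cg K hfd1
    (exists_lipschitzWith_of_abs_deriv_le hfd1 (hbd1.imp fun _ hM y x => hM x y)) hfd2
    (exists_lipschitzWith_of_abs_deriv_le hfd22 hbd22)).imp fun _ hC g a hg _ => hC g a hg
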